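/- arXiv:1311.2852 — 6 statements merged into one kernel-verified Lean document; each statement's English description precedes it below -/
import Mathlib

section
/- For every joint distribution P on 𝒳 × 𝒴 × 𝒵: S̃I(X:Y;Z) = S̃I(X:Z;Y), C̃I(X:Y;Z) = C̃I(X:Z;Y), and MI_P(X:Z) + ŨI(X:Y∖Z) = MI_P(X:Y) + ŨI(X:Z∖Y). Here S̃I(X:Z;Y), C̃I(X:Z;Y) are the corresponding quantities computed with the roles of Y and Z interchanged (i.e. for the swapped joint distribution on 𝒳 × 𝒵 × 𝒴). -/
/-! The chain rule gives `MI(X:(Y,Z)) = MI(X:Z) + MI(X:Y|Z)` (`miXYZ_eq`), and by interchanging `Y`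
and `Z` also `MI(X:(Y,Z)) = MI(X:Y) + MI(X:Z|Y)` (`miXYZ_eq'`). Subtracting the two shows that
co-information is symmetric in `Y` and `Z`; `MI(X:(Y,Z))` is symmetric by its definition. The
interchange carries `Δ_P` onto the corresponding set for the swapped law (`image_swap`), so the
extrema defining `S̃I` and `C̃I` agree.

For the consistency condition, `MI(X:Z)` depends only on the `(X,Z)` marginal and is therefore
constant on `Δ_P`. Both sides thus equal `min_{Q ∈ Δ_P} MI_Q(X:(Y,Z))` (`sInf_miXYZ`, applied to `P`
and to the swapped law). The infimum commutes with the additive constant because it is taken over a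
nonempty set bounded below by Gibbs' inequality. -/

open scoped BigOperators
open Real

namespace PID

variable {𝒳 𝒴 𝒵 : Type*} [Fintype 𝒳] [Fintype 𝒴] [Fintype 𝒵]

/-- A joint distribution on `𝒳 × 𝒴 × 𝒵`: nonnegative values summing to 1. -/
def IsDist (P : 𝒳 × 𝒴 × 𝒵 → ℝ) : Prop :=
  (∀ p, 0 ≤ P p) ∧ ∑ p, P p = 1

noncomputable def margX (P : 𝒳 × 𝒴 × 𝒵 → ℝ) (x : 𝒳) : ℝ := ∑ y, ∑ z, P (x, y, z)
noncomputable def margY (P : 𝒳 × 𝒴 × 𝒵 → ℝ) (y : 𝒴) : ℝ := ∑ x, ∑ z, P (x, y, z)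
noncomputable def margZ (P : 𝒳 × 𝒴 × 𝒵 → ℝ) (z : 𝒵) : ℝ := ∑ x, ∑ y, P (x, y, z)
noncomputable def margXY (P : 𝒳 × 𝒴 × 𝒵 → ℝ) (x : 𝒳) (y : 𝒴) : ℝ := ∑ z, P (x, y, z)
noncomputable def margXZ (P : 𝒳 × 𝒴 × 𝒵 → ℝ) (x : 𝒳) (z : 𝒵) : ℝ := ∑ y, P (x, y, z)
noncomputable def margYZ (P : 𝒳 × 𝒴 × 𝒵 → ℝ) (y : 𝒴) (z : 𝒵) : ℝ := ∑ x, P (x, y, z)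

/-- Mutual information `MI(X:Y)`. -/
noncomputable def miXY (P : 𝒳 × 𝒴 × 𝒵 → ℝ) : ℝ :=
  ∑ x, ∑ y, margXY P x y * Real.log (margXY P x y / (margX P x * margY P y))

/-- Mutual information `MI(X:Z)`. -/
noncomputable def miXZ (P : 𝒳 × 𝒴 × 𝒵 → ℝ) : ℝ :=
  ∑ x, ∑ z, margXZ P x z * Real.log (margXZ P x z / (margX P x * margZ P z))

/-- Mutual information `MI(Y:Z)`. -/
noncomputable def miYZ (P : 𝒳 × 𝒴 × 𝒵 → ℝ) : ℝ :=
  ∑ y, ∑ z, margYZ P y z * Real.log (margYZ P y z / (margY P y * margZ P z))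

/-- Mutual information `MI(X:(Y,Z))`. -/
noncomputable def miXYZ (P : 𝒳 × 𝒴 × 𝒵 → ℝ) : ℝ :=
  ∑ x, ∑ y, ∑ z, P (x, y, z) * Real.log (P (x, y, z) / (margX P x * margYZ P y z))

/-- Conditional mutual information `MI(X:Y|Z)`. -/
noncomputable def miXY_Z (P : 𝒳 × 𝒴 × 𝒵 → ℝ) : ℝ :=
  ∑ x, ∑ y, ∑ z, P (x, y, z) *
    Real.log (P (x, y, z) * margZ P z / (margXZ P x z * margYZ P y z))

/-- Conditional mutual information `MI(X:Z|Y)`. -/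
noncomputable def miXZ_Y (P : 𝒳 × 𝒴 × 𝒵 → ℝ) : ℝ :=
  ∑ x, ∑ y, ∑ z, P (x, y, z) *
    Real.log (P (x, y, z) * margY P y / (margXY P x y * margYZ P y z))

/-- Conditional mutual information `MI(Y:Z|X)`. -/
noncomputable def miYZ_X (P : 𝒳 × 𝒴 × 𝒵 → ℝ) : ℝ :=
  ∑ x, ∑ y, ∑ z, P (x, y, z) *
    Real.log (P (x, y, z) * margX P x / (margXY P x y * margXZ P x z))

/-- Conditional entropy `H(X|Y,Z)`. -/
noncomputable def hX_YZ (P : 𝒳 × 𝒴 × 𝒵 → ℝ) : ℝ :=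
  -∑ x, ∑ y, ∑ z, P (x, y, z) * Real.log (P (x, y, z) / margYZ P y z)

/-- Conditional entropy `H(X|Z)`. -/
noncomputable def hX_Z (P : 𝒳 × 𝒴 × 𝒵 → ℝ) : ℝ :=
  -∑ x, ∑ z, margXZ P x z * Real.log (margXZ P x z / margZ P z)

/-- Conditional entropy `H(Y|Z)`. -/
noncomputable def hY_Z (P : 𝒳 × 𝒴 × 𝒵 → ℝ) : ℝ :=
  -∑ y, ∑ z, margYZ P y z * Real.log (margYZ P y z / margZ P z)

/-- Conditional entropy `H(Z|Y)`. -/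
noncomputable def hZ_Y (P : 𝒳 × 𝒴 × 𝒵 → ℝ) : ℝ :=
  -∑ y, ∑ z, margYZ P y z * Real.log (margYZ P y z / margY P y)

/-- Co-information `CoI(X;Y;Z) = MI(X:Y) − MI(X:Y|Z)`. -/
noncomputable def coI (P : 𝒳 × 𝒴 × 𝒵 → ℝ) : ℝ := miXY P - miXY_Z P

/-- `Δ_P`: the joint distributions with the same pair marginals as `P` on `(X,Y)` and `(X,Z)`. -/
def ΔP (P : 𝒳 × 𝒴 × 𝒵 → ℝ) : Set (𝒳 × 𝒴 × 𝒵 → ℝ) :=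
  {Q | IsDist Q ∧ (∀ x y, margXY Q x y = margXY P x y) ∧ ∀ x z, margXZ Q x z = margXZ P x z}

/-- `ŨI(X:Y∖Z) = min_{Q ∈ Δ_P} MI_Q(X:Y|Z)`. -/
noncomputable def UIY (P : 𝒳 × 𝒴 × 𝒵 → ℝ) : ℝ := sInf (miXY_Z '' ΔP P)

/-- `ŨI(X:Z∖Y) = min_{Q ∈ Δ_P} MI_Q(X:Z|Y)`. -/
noncomputable def UIZ (P : 𝒳 × 𝒴 × 𝒵 → ℝ) : ℝ := sInf (miXZ_Y '' ΔP P)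

/-- `S̃I(X:Y;Z) = max_{Q ∈ Δ_P} CoI_Q(X;Y;Z)`. -/
noncomputable def SI (P : 𝒳 × 𝒴 × 𝒵 → ℝ) : ℝ := sSup (coI '' ΔP P)

/-- `C̃I(X:Y;Z) = MI_P(X:(Y,Z)) − min_{Q ∈ Δ_P} MI_Q(X:(Y,Z))`. -/
noncomputable def CI (P : 𝒳 × 𝒴 × 𝒵 → ℝ) : ℝ := miXYZ P - sInf (miXYZ '' ΔP P)

/-! ### Chain rule and Gibbs' inequality -/

/-- Where a nonnegative `Q` is positive, its marginals are positive. -/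
lemma marg_pos (Q : 𝒳 × 𝒴 × 𝒵 → ℝ) (hQ : ∀ p, 0 ≤ Q p) {x : 𝒳} {y : 𝒴} {z : 𝒵}
    (h : 0 < Q (x, y, z)) :
    0 < margX Q x ∧ 0 < margZ Q z ∧ 0 < margXZ Q x z ∧ 0 < margYZ Q y z := by
  have hXZ : 0 < margXZ Q x z :=
    Finset.sum_pos' (fun _ _ => hQ _) ⟨y, Finset.mem_univ _, h⟩
  refine ⟨?_, ?_, hXZ, Finset.sum_pos' (fun _ _ => hQ _) ⟨x, Finset.mem_univ _, h⟩⟩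
  · exact Finset.sum_pos' (fun _ _ => Finset.sum_nonneg fun _ _ => hQ _) ⟨y, Finset.mem_univ _,
      Finset.sum_pos' (fun _ _ => hQ _) ⟨z, Finset.mem_univ _, h⟩⟩
  · exact Finset.sum_pos' (fun _ _ => Finset.sum_nonneg fun _ _ => hQ _)
      ⟨x, Finset.mem_univ _, hXZ⟩

/-- Chain rule `MI(X:(Y,Z)) = MI(X:Z) + MI(X:Y|Z)`: wherever `Q` is positive so are all its
marginals, and there the logarithms add up. -/
lemma miXYZ_eq (Q : 𝒳 × 𝒴 × 𝒵 → ℝ) (hQ : ∀ p, 0 ≤ Q p) :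
    miXYZ Q = miXZ Q + miXY_Z Q := by
  have h1 : miXZ Q = ∑ x, ∑ y, ∑ z,
      Q (x, y, z) * Real.log (margXZ Q x z / (margX Q x * margZ Q z)) := by
    unfold miXZ
    refine Finset.sum_congr rfl fun x _ => ?_
    rw [Finset.sum_comm]
    refine Finset.sum_congr rfl fun z _ => ?_
    rw [← Finset.sum_mul]
    rfl
  rw [h1]
  unfold miXYZ miXY_Z
  simp only [← Finset.sum_add_distrib]
  refine Finset.sum_congr rfl fun x _ => Finset.sum_congr rfl fun y _ =>
    Finset.sum_congr rfl fun z _ => ?_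
  rcases (hQ (x, y, z)).eq_or_lt with h | h
  · simp [← h]
  · obtain ⟨hX, hZ, hXZ, hYZ⟩ := marg_pos Q hQ h
    rw [← mul_add, ← Real.log_mul (by positivity) (by positivity)]
    congr 2
    field_simp

/-- Gibbs' inequality: mutual information is nonnegative. Termwise this is `1 - r⁻¹ ≤ log r` at
`r = Q / (Q_X Q_YZ)`, and both `Q` and `Q_X Q_YZ` have total mass one. -/
lemma miXYZ_nonneg (Q : 𝒳 × 𝒴 × 𝒵 → ℝ) (hQ : IsDist Q) : 0 ≤ miXYZ Q := by
  have hsum : ∑ x, ∑ y, ∑ z, Q (x, y, z) = 1 := by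
    rw [← hQ.2]; simp only [Fintype.sum_prod_type]
  have hX : ∑ x, margX Q x = 1 := hsum
  have hYZ : ∑ y, ∑ z, margYZ Q y z = 1 := by
    rw [← hsum, Finset.sum_comm]
    unfold margYZ
    rw [Finset.sum_comm]
    rw [Finset.sum_comm (s := (Finset.univ : Finset 𝒳))]
    refine Finset.sum_congr rfl fun y _ => ?_
    rw [Finset.sum_comm]
  have hprod : ∑ x, ∑ y, ∑ z, margX Q x * margYZ Q y z = 1 := by
    simp only [← Finset.mul_sum, hYZ, mul_one, hX]
  have h0 : ∑ x, ∑ y, ∑ z, (Q (x, y, z) - margX Q x * margYZ Q y z) = 0 := by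
    simp only [Finset.sum_sub_distrib, hprod, hsum, sub_self]
  rw [← h0]
  unfold miXYZ
  refine Finset.sum_le_sum fun x _ => Finset.sum_le_sum fun y _ =>
    Finset.sum_le_sum fun z _ => ?_
  rcases (hQ.1 (x, y, z)).eq_or_lt with h | h
  · have h1 : 0 ≤ margX Q x := Finset.sum_nonneg fun _ _ => Finset.sum_nonneg fun _ _ => hQ.1 _
    have h2 : 0 ≤ margYZ Q y z := Finset.sum_nonneg fun _ _ => hQ.1 _
    simp only [← h, zero_mul, zero_sub]
    have := mul_nonneg h1 h2
    linarith
  · obtain ⟨hX, hZ, hXZ, hYZ⟩ := marg_pos Q hQ.1 h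
    have hl := Real.one_sub_inv_le_log_of_pos (div_pos h (mul_pos hX hYZ))
    calc Q (x, y, z) - margX Q x * margYZ Q y z
        = Q (x, y, z) * (1 - (Q (x, y, z) / (margX Q x * margYZ Q y z))⁻¹) := by field_simp
      _ ≤ _ := mul_le_mul_of_nonneg_left hl h.le

/-! ### Interchanging `Y` and `Z` -/

/-- The joint law of `(X, Z, Y)` when `Q` is the joint law of `(X, Y, Z)`. -/
def swapYZ {𝒳 𝒴 𝒵 : Type*} (Q : 𝒳 × 𝒴 × 𝒵 → ℝ) : 𝒳 × 𝒵 × 𝒴 → ℝ :=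
  fun p => Q (p.1, p.2.2, p.2.1)

lemma margX_swap (Q : 𝒳 × 𝒴 × 𝒵 → ℝ) (x : 𝒳) : margX (swapYZ Q) x = margX Q x :=
  Finset.sum_comm

lemma miXY_swap (Q : 𝒳 × 𝒴 × 𝒵 → ℝ) : miXY (swapYZ Q) = miXZ Q := by
  unfold miXY miXZ
  simp only [margX_swap]
  rfl

lemma miXZ_swap (Q : 𝒳 × 𝒴 × 𝒵 → ℝ) : miXZ (swapYZ Q) = miXY Q :=
  (miXY_swap (swapYZ Q)).symm

lemma miXYZ_swap (Q : 𝒳 × 𝒴 × 𝒵 → ℝ) : miXYZ (swapYZ Q) = miXYZ Q := by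
  unfold miXYZ
  simp only [margX_swap]
  exact Finset.sum_congr rfl fun x _ => Finset.sum_comm

lemma miXY_Z_swap (Q : 𝒳 × 𝒴 × 𝒵 → ℝ) : miXY_Z (swapYZ Q) = miXZ_Y Q :=
  Finset.sum_congr rfl fun _ _ => Finset.sum_comm

lemma isDist_swap {Q : 𝒳 × 𝒴 × 𝒵 → ℝ} (hQ : IsDist Q) : IsDist (swapYZ Q) := by
  refine ⟨fun p => hQ.1 _, ?_⟩
  rw [← hQ.2]
  simp only [Fintype.sum_prod_type]
  exact Finset.sum_congr rfl fun x _ => Finset.sum_comm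

lemma swap_mem {P Q : 𝒳 × 𝒴 × 𝒵 → ℝ} (hQ : Q ∈ ΔP P) : swapYZ Q ∈ ΔP (swapYZ P) :=
  ⟨isDist_swap hQ.1, hQ.2.2, hQ.2.1⟩

/-- A functional `f` on laws of `(X, Y, Z)` and its mirror `g` on laws of `(X, Z, Y)` take the same
values on `Δ_P` and on its mirror image. -/
lemma image_swap (P : 𝒳 × 𝒴 × 𝒵 → ℝ) (f : (𝒳 × 𝒴 × 𝒵 → ℝ) → ℝ) (g : (𝒳 × 𝒵 × 𝒴 → ℝ) → ℝ)
    (h : ∀ Q, IsDist Q → g (swapYZ Q) = f Q) : f '' ΔP P = g '' ΔP (swapYZ P) := by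
  ext r
  constructor
  · rintro ⟨Q, hQ, rfl⟩
    exact ⟨swapYZ Q, swap_mem hQ, h Q hQ.1⟩
  · rintro ⟨Q, hQ, rfl⟩
    exact ⟨swapYZ Q, swap_mem hQ, (h _ (isDist_swap hQ.1)).symm⟩

/-- The other chain rule, `MI(X:(Y,Z)) = MI(X:Y) + MI(X:Z|Y)`. -/
lemma miXYZ_eq' (Q : 𝒳 × 𝒴 × 𝒵 → ℝ) (hQ : IsDist Q) : miXYZ Q = miXY Q + miXZ_Y Q := by
  have := miXYZ_eq (swapYZ Q) (isDist_swap hQ).1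
  rwa [miXYZ_swap, miXZ_swap, miXY_Z_swap] at this

lemma coI_swap (Q : 𝒳 × 𝒴 × 𝒵 → ℝ) (hQ : IsDist Q) : coI (swapYZ Q) = coI Q := by
  unfold coI
  rw [miXY_swap, miXY_Z_swap]
  linarith [miXYZ_eq Q hQ.1, miXYZ_eq' Q hQ]

/-! ### Minimisation over `Δ_P` -/

lemma miXZ_const {P Q : 𝒳 × 𝒴 × 𝒵 → ℝ} (hQ : Q ∈ ΔP P) : miXZ Q = miXZ P := by
  have hX : ∀ x, margX Q x = margX P x := fun x => Finset.sum_congr rfl fun y _ => hQ.2.1 x y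
  have hZ : ∀ z, margZ Q z = margZ P z := fun z => Finset.sum_congr rfl fun x _ => hQ.2.2 x z
  unfold miXZ
  simp only [hX, hZ, hQ.2.2]

/-- On `Δ_P` the functionals `MI(X:(Y,Z))` and `MI(X:Y|Z)` differ by the constant `MI_P(X:Z)`, hence
so do their minima. Nonemptiness and the lower bound keep the real infimum from being a junk
value. -/
lemma sInf_miXYZ (P : 𝒳 × 𝒴 × 𝒵 → ℝ) (hP : IsDist P) :
    sInf (miXYZ '' ΔP P) = miXZ P + UIY P := by
  have hne : (miXYZ '' ΔP P).Nonempty := ⟨_, P, ⟨hP, fun _ _ => rfl, fun _ _ => rfl⟩, rfl⟩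
  have hbdd : BddBelow (miXYZ '' ΔP P) := by
    refine ⟨0, ?_⟩
    rintro _ ⟨Q, hQ, rfl⟩
    exact miXYZ_nonneg Q hQ.1
  have himg : miXY_Z '' ΔP P = OrderIso.subRight (miXZ P) '' (miXYZ '' ΔP P) := by
    rw [Set.image_image]
    refine Set.image_congr fun Q hQ => ?_
    rw [OrderIso.subRight_apply, miXYZ_eq Q hQ.1.1, miXZ_const hQ]
    ring
  rw [UIY, himg, ← OrderIso.map_csInf' _ hne hbdd, OrderIso.subRight_apply]
  ring

/-- symmetry of `S̃I` and `C̃I` in `Y` and `Z`, and the consistency condition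
`MI(X:Z) + ŨI(X:Y∖Z) = MI(X:Y) + ŨI(X:Z∖Y)`. -/
theorem stmt9 [Nonempty 𝒳] [Nonempty 𝒴] [Nonempty 𝒵]
    (P : 𝒳 × 𝒴 × 𝒵 → ℝ) (hP : IsDist P)
    (Psw : 𝒳 × 𝒵 × 𝒴 → ℝ) (hPsw : ∀ x y z, Psw (x, z, y) = P (x, y, z)) :
    SI P = SI Psw ∧ CI P = CI Psw ∧
    miXZ P + UIY P = miXY P + UIZ P := by
  obtain rfl : Psw = swapYZ P := funext fun ⟨x, z, y⟩ => hPsw x y z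
  refine ⟨?_, ?_, ?_⟩
  · rw [SI, SI, image_swap P coI coI coI_swap]
  · rw [CI, CI, miXYZ_swap, image_swap P miXYZ miXYZ fun Q _ => miXYZ_swap Q]
  · have hUI : UIZ P = UIY (swapYZ P) := by
      rw [UIZ, UIY, image_swap P miXZ_Y miXY_Z fun Q _ => miXY_Z_swap Q]
    rw [hUI, ← sInf_miXYZ P hP, ← miXZ_swap, ← sInf_miXYZ _ (isDist_swap hP),
      image_swap P miXYZ miXYZ fun Q _ => miXYZ_swap Q]

end PID
end

section
/- Let P be a joint distribution on 𝒳 × 𝒴 × 𝒵 under which X is conditionally independent of Z given Y, i.e. MI_P(X:Z|Y) = 0. Then P itself minimizes MI_Q(X:Z|Y) over Δ_P, and consequently ŨI(X:Y∖Z) = MI_P(X:Y|Z), ŨI(X:Z∖Y) = 0, S̃I(X:Y;Z) = MI_P(X:Z), and C̃I(X:Y;Z) = 0. -/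
/-!
The chain rule gives `MI(X:(Y,Z)) = MI(X:Y) + MI(X:Z|Y) = MI(X:Z) + MI(X:Y|Z)`
(`miXYZ_eq_add_miXZ_Y`, `miXYZ_eq_add_miXY_Z`).
On `Δ_P` the terms `MI(X:Y)` and `MI(X:Z)` are constant, since they depend only on the fixed pair
marginals. Hence `MI(X:(Y,Z))`, `MI(X:Y|Z)` and `-CoI` each equal `MI(X:Z|Y)` plus a constant on
`Δ_P`, so all of these optimization problems have the same solutions. Since `MI(X:Z|Y) ≥ 0`
(`miXZ_Y_nonneg`, Gibbs' inequality), the hypothesis `MI_P(X:Z|Y) = 0` says that `P` is such a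
solution, and all optimal values are read off at `P`.
-/

open scoped BigOperators
open Real

namespace PID

set_option linter.unusedSectionVars false

variable {𝒳 𝒴 𝒵 : Type*} [Fintype 𝒳] [Fintype 𝒴] [Fintype 𝒵]

theorem le_margXY {P : 𝒳 × 𝒴 × 𝒵 → ℝ} (h : ∀ p, 0 ≤ P p) (x : 𝒳) (y : 𝒴) (z : 𝒵) :
    P (x, y, z) ≤ margXY P x y :=
  Finset.single_le_sum (f := fun z => P (x, y, z)) (fun _ _ => h _) (Finset.mem_univ z)

theorem le_margXZ {P : 𝒳 × 𝒴 × 𝒵 → ℝ} (h : ∀ p, 0 ≤ P p) (x : 𝒳) (y : 𝒴) (z : 𝒵) :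
    P (x, y, z) ≤ margXZ P x z :=
  Finset.single_le_sum (f := fun y => P (x, y, z)) (fun _ _ => h _) (Finset.mem_univ y)

theorem le_margYZ {P : 𝒳 × 𝒴 × 𝒵 → ℝ} (h : ∀ p, 0 ≤ P p) (x : 𝒳) (y : 𝒴) (z : 𝒵) :
    P (x, y, z) ≤ margYZ P y z :=
  Finset.single_le_sum (f := fun x => P (x, y, z)) (fun _ _ => h _) (Finset.mem_univ x)

theorem margXY_nonneg {P : 𝒳 × 𝒴 × 𝒵 → ℝ} (h : ∀ p, 0 ≤ P p) (x : 𝒳) (y : 𝒴) :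
    0 ≤ margXY P x y :=
  Finset.sum_nonneg fun _ _ => h _

theorem margXZ_nonneg {P : 𝒳 × 𝒴 × 𝒵 → ℝ} (h : ∀ p, 0 ≤ P p) (x : 𝒳) (z : 𝒵) :
    0 ≤ margXZ P x z :=
  Finset.sum_nonneg fun _ _ => h _

theorem margXY_le_margX {P : 𝒳 × 𝒴 × 𝒵 → ℝ} (h : ∀ p, 0 ≤ P p) (x : 𝒳) (y : 𝒴) :
    margXY P x y ≤ margX P x :=
  Finset.single_le_sum (f := fun y => margXY P x y) (fun _ _ => margXY_nonneg h _ _)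
    (Finset.mem_univ y)

theorem margXY_le_margY {P : 𝒳 × 𝒴 × 𝒵 → ℝ} (h : ∀ p, 0 ≤ P p) (x : 𝒳) (y : 𝒴) :
    margXY P x y ≤ margY P y :=
  Finset.single_le_sum (f := fun x => margXY P x y) (fun _ _ => margXY_nonneg h _ _)
    (Finset.mem_univ x)

theorem margXZ_le_margZ {P : 𝒳 × 𝒴 × 𝒵 → ℝ} (h : ∀ p, 0 ≤ P p) (x : 𝒳) (z : 𝒵) :
    margXZ P x z ≤ margZ P z :=
  Finset.single_le_sum (f := fun x => margXZ P x z) (fun _ _ => margXZ_nonneg h _ _)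
    (Finset.mem_univ x)

/-- The termwise form of the chain rule: `t = P(x,y,z)`, `a = P(x)`, `b = P(x,y)`, `c = P(y)`,
`d = P(y,z)`. The marginals are positive as soon as `t` is; for `t = 0` all terms vanish. -/
theorem mul_log_chain {t a b c d : ℝ} (ht : 0 ≤ t) (htb : t ≤ b) (hba : b ≤ a) (hbc : b ≤ c)
    (htd : t ≤ d) :
    t * Real.log (t / (a * d)) = t * Real.log (b / (a * c)) + t * Real.log (t * c / (b * d)) := by
  rcases ht.eq_or_lt with rfl | ht
  · simp
  have hb : 0 < b := ht.trans_le htb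
  have ha : 0 < a := hb.trans_le hba
  have hc : 0 < c := hb.trans_le hbc
  have hd : 0 < d := ht.trans_le htd
  rw [← mul_add, ← Real.log_mul (by positivity) (by positivity)]
  congr 2
  field_simp

/-- Chain rule `MI(X:(Y,Z)) = MI(X:Y) + MI(X:Z|Y)`. -/
theorem miXYZ_eq_add_miXZ_Y {P : 𝒳 × 𝒴 × 𝒵 → ℝ} (h : ∀ p, 0 ≤ P p) :
    miXYZ P = miXY P + miXZ_Y P := by
  simp only [miXYZ, miXY, miXZ_Y, ← Finset.sum_add_distrib]
  refine Finset.sum_congr rfl fun x _ => Finset.sum_congr rfl fun y _ => ?_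
  conv_rhs => enter [1, 1]; rw [margXY]
  rw [Finset.sum_mul, ← Finset.sum_add_distrib]
  exact Finset.sum_congr rfl fun z _ => mul_log_chain (h _) (le_margXY h x y z)
    (margXY_le_margX h x y) (margXY_le_margY h x y) (le_margYZ h x y z)

theorem margXZ_le_margX {P : 𝒳 × 𝒴 × 𝒵 → ℝ} (h : ∀ p, 0 ≤ P p) (x : 𝒳) (z : 𝒵) :
    margXZ P x z ≤ margX P x := by
  have e : margX P x = ∑ z, margXZ P x z := Finset.sum_comm
  rw [e]
  exact Finset.single_le_sum (f := fun z => margXZ P x z) (fun _ _ => margXZ_nonneg h _ _)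
    (Finset.mem_univ z)

/-- Chain rule `MI(X:(Y,Z)) = MI(X:Z) + MI(X:Y|Z)`. -/
theorem miXYZ_eq_add_miXY_Z {P : 𝒳 × 𝒴 × 𝒵 → ℝ} (h : ∀ p, 0 ≤ P p) :
    miXYZ P = miXZ P + miXY_Z P := by
  simp only [miXYZ, miXZ, miXY_Z, ← Finset.sum_add_distrib]
  refine Finset.sum_congr rfl fun x _ => ?_
  rw [Finset.sum_comm, Finset.sum_comm (s := (Finset.univ : Finset 𝒴)),
    ← Finset.sum_add_distrib]
  refine Finset.sum_congr rfl fun z _ => ?_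
  conv_rhs => enter [1, 1]; rw [margXZ]
  rw [Finset.sum_mul, ← Finset.sum_add_distrib]
  exact Finset.sum_congr rfl fun y _ => mul_log_chain (h _) (le_margXZ h x y z)
    (margXZ_le_margX h x z) (margXZ_le_margZ h x z) (le_margYZ h x y z)

/-- The termwise form of Gibbs' inequality, from `log u ≥ 1 - 1 / u`; division by zero is harmless
because only `b * d / c ≥ 0` is needed when `t = 0`. -/
theorem sub_le_mul_log {t b c d : ℝ} (ht : 0 ≤ t) (htb : t ≤ b) (hbc : b ≤ c) (htd : t ≤ d) :
    t - b * d / c ≤ t * Real.log (t * c / (b * d)) := by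
  rcases ht.eq_or_lt with rfl | ht
  · have : 0 ≤ b * d / c := div_nonneg (mul_nonneg htb htd) (htb.trans hbc)
    simpa using this
  have hb : 0 < b := ht.trans_le htb
  have hc : 0 < c := hb.trans_le hbc
  have hd : 0 < d := ht.trans_le htd
  have h1 := Real.one_sub_inv_le_log_of_pos (x := t * c / (b * d)) (by positivity)
  calc t - b * d / c = t * (1 - (t * c / (b * d))⁻¹) := by field_simp
    _ ≤ _ := mul_le_mul_of_nonneg_left h1 ht.le

theorem miXZ_Y_nonneg {P : 𝒳 × 𝒴 × 𝒵 → ℝ} (h : ∀ p, 0 ≤ P p) : 0 ≤ miXZ_Y P := by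
  have key : ∑ x, ∑ y, ∑ z, (P (x, y, z) - margXY P x y * margYZ P y z / margY P y) = 0 := by
    rw [Finset.sum_comm]
    refine Finset.sum_eq_zero fun y _ => ?_
    have hz : ∑ z, margYZ P y z = margY P y := Finset.sum_comm
    have hx : ∑ x, margXY P x y = margY P y := rfl
    have hs : ∑ x, ∑ z, P (x, y, z) = margY P y := rfl
    simp only [Finset.sum_sub_distrib, ← Finset.sum_div, ← Finset.mul_sum, ← Finset.sum_mul,
      hz, hx, hs]
    rw [mul_self_div_self, sub_self]
  rw [← key]
  exact Finset.sum_le_sum fun x _ => Finset.sum_le_sum fun y _ => Finset.sum_le_sum fun z _ =>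
    sub_le_mul_log (h _) (le_margXY h x y z) (margXY_le_margY h x y) (le_margYZ h x y z)

theorem miXY_congr {P Q : 𝒳 × 𝒴 × 𝒵 → ℝ} (h : ∀ x y, margXY Q x y = margXY P x y) :
    miXY Q = miXY P := by
  have hX : ∀ x, margX Q x = margX P x := fun x => Finset.sum_congr rfl fun y _ => h x y
  have hY : ∀ y, margY Q y = margY P y := fun y => Finset.sum_congr rfl fun x _ => h x y
  simp only [miXY, h, hX, hY]

theorem miXZ_congr {P Q : 𝒳 × 𝒴 × 𝒵 → ℝ} (h : ∀ x y, margXY Q x y = margXY P x y)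
    (h' : ∀ x z, margXZ Q x z = margXZ P x z) : miXZ Q = miXZ P := by
  have hX : ∀ x, margX Q x = margX P x := fun x => Finset.sum_congr rfl fun y _ => h x y
  have hZ : ∀ z, margZ Q z = margZ P z := fun z => Finset.sum_congr rfl fun x _ => h' x z
  simp only [miXZ, h', hX, hZ]

/-- if `X ⊥ Z | Y` under `P`, then `P` minimizes `MI_Q(X:Z|Y)` over `Δ_P`,
and `ŨI(X:Y∖Z) = MI(X:Y|Z)`, `ŨI(X:Z∖Y) = 0`, `S̃I(X:Y;Z) = MI(X:Z)`, `C̃I(X:Y;Z) = 0`. -/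
theorem stmt11 [Nonempty 𝒳] [Nonempty 𝒴] [Nonempty 𝒵]
    (P : 𝒳 × 𝒴 × 𝒵 → ℝ) (hP : IsDist P) (hci : miXZ_Y P = 0) :
    (∀ Q ∈ ΔP P, miXZ_Y P ≤ miXZ_Y Q) ∧
    UIY P = miXY_Z P ∧ UIZ P = 0 ∧ SI P = miXZ P ∧ CI P = 0 := by
  have hmem : P ∈ ΔP P := ⟨hP, fun _ _ => rfl, fun _ _ => rfl⟩
  have hmin : ∀ Q ∈ ΔP P, miXZ_Y P ≤ miXZ_Y Q := fun Q hQ => hci ▸ miXZ_Y_nonneg hQ.1.1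
  -- On `Δ_P` every objective is `MI(X:Z|Y)` up to sign and an additive constant.
  have hXYZ : ∀ Q ∈ ΔP P, miXYZ Q = miXY P + miXZ_Y Q := fun Q hQ => by
    rw [miXYZ_eq_add_miXZ_Y hQ.1.1, miXY_congr hQ.2.1]
  have hXY_Z : ∀ Q ∈ ΔP P, miXY_Z Q = miXY P + miXZ_Y Q - miXZ P := fun Q hQ => by
    have h := miXYZ_eq_add_miXY_Z hQ.1.1
    rw [miXZ_congr hQ.2.1 hQ.2.2, hXYZ Q hQ] at h
    linarith
  have hcoI : ∀ Q ∈ ΔP P, coI Q = miXZ P - miXZ_Y Q := fun Q hQ => by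
    rw [coI, miXY_congr hQ.2.1, hXY_Z Q hQ]
    ring
  have least : ∀ f : (𝒳 × 𝒴 × 𝒵 → ℝ) → ℝ, (∀ Q ∈ ΔP P, f P ≤ f Q) →
      sInf (f '' ΔP P) = f P := fun f hf =>
    IsLeast.csInf_eq ⟨Set.mem_image_of_mem f hmem, Set.forall_mem_image.2 hf⟩
  refine ⟨hmin, ?_, ?_, ?_, ?_⟩
  · refine least _ fun Q hQ => ?_
    rw [hXY_Z P hmem, hXY_Z Q hQ]
    linarith [hmin Q hQ]
  · exact (least _ hmin).trans hci
  · have hgreatest : sSup (coI '' ΔP P) = coI P :=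
      IsGreatest.csSup_eq ⟨Set.mem_image_of_mem coI hmem, Set.forall_mem_image.2 fun Q hQ => by
        rw [hcoI P hmem, hcoI Q hQ]
        linarith [hmin Q hQ]⟩
    rw [SI, hgreatest, hcoI P hmem, hci, sub_zero]
  · refine sub_eq_zero.2 (least _ fun Q hQ => ?_).symm
    rw [hXYZ P hmem, hXYZ Q hQ]
    linarith [hmin Q hQ]

end PID
end

section
/- Let P be a joint distribution on 𝒳 × 𝒳 × 𝒵 concentrated on the diagonal in the first two coordinates, i.e. P(x,y,z) = 0 whenever y ≠ x (this models Y = X). Then C̃I(X:X;Z) = 0, S̃I(X:X;Z) = MI_P(X:Z), ŨI(X:X∖Z) = H_P(X|Z), and ŨI(X:Z∖X) = 0, where H_P(X|Z) denotes the conditional entropy of the first coordinate given the third under P. -/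
/-!
If `P` is carried by `{Y = X}`, the pair marginals on `(X,Y)` and `(X,Z)` already determine it,
so `ΔP P = {P}` (`deltaP_eq_singleton`) and each of the four extrema is attained at `P` alone.
It remains to evaluate the functionals at `P`: `MI(X:Z|X) = 0`, `MI(X:X|Z) = H(X|Z)` and
`MI(X:X) - MI(X:X|Z) = H(X) - H(X|Z) = MI(X:Z)`. These hold termwise in `(x, z)`: terms with
`P (x, x, z) = 0` vanish, and otherwise the marginals at `x` and at `z` are positive, so the
logarithms split.
-/

open scoped BigOperators
open Real

namespace PID

variable {𝒳 𝒴 𝒵 : Type*} [Fintype 𝒳] [Fintype 𝒴] [Fintype 𝒵]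

lemma margXZ_diag {P : 𝒳 × 𝒳 × 𝒵 → ℝ} (hdiag : ∀ x y z, y ≠ x → P (x, y, z) = 0)
    (x : 𝒳) (z : 𝒵) : margXZ P x z = P (x, x, z) :=
  Fintype.sum_eq_single x fun y hy => hdiag x y z hy

lemma margYZ_diag {P : 𝒳 × 𝒳 × 𝒵 → ℝ} (hdiag : ∀ x y z, y ≠ x → P (x, y, z) = 0)
    (x : 𝒳) (z : 𝒵) : margYZ P x z = P (x, x, z) :=
  Fintype.sum_eq_single x fun y hy => hdiag y x z hy.symm

lemma margXY_off_diag {P : 𝒳 × 𝒳 × 𝒵 → ℝ} (hdiag : ∀ x y z, y ≠ x → P (x, y, z) = 0)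
    {x y : 𝒳} (hy : y ≠ x) : margXY P x y = 0 :=
  Finset.sum_eq_zero fun z _ => hdiag x y z hy

lemma margXY_diag {P : 𝒳 × 𝒳 × 𝒵 → ℝ} (hdiag : ∀ x y z, y ≠ x → P (x, y, z) = 0)
    (x : 𝒳) : margXY P x x = margX P x :=
  (Fintype.sum_eq_single x fun _ hy => margXY_off_diag hdiag hy).symm

lemma margY_diag {P : 𝒳 × 𝒳 × 𝒵 → ℝ} (hdiag : ∀ x y z, y ≠ x → P (x, y, z) = 0)
    (x : 𝒳) : margY P x = margX P x :=
  (Fintype.sum_eq_single x fun _ hy => margXY_off_diag hdiag hy.symm).trans (margXY_diag hdiag x)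

/-- Sums weighted by a diagonal `P` reduce to sums over `(x, z)`. -/
lemma sum_diag {P : 𝒳 × 𝒳 × 𝒵 → ℝ} (hdiag : ∀ x y z, y ≠ x → P (x, y, z) = 0)
    (g : 𝒳 → 𝒳 → 𝒵 → ℝ) :
    ∑ x, ∑ y, ∑ z, P (x, y, z) * g x y z = ∑ x, ∑ z, P (x, x, z) * g x x z :=
  Finset.sum_congr rfl fun x _ => Fintype.sum_eq_single x fun y hy =>
    Finset.sum_eq_zero fun z _ => by rw [hdiag x y z hy, zero_mul]

lemma margX_pos {P : 𝒳 × 𝒳 × 𝒵 → ℝ} (hnn : ∀ p, 0 ≤ P p) {x : 𝒳} {z : 𝒵}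
    (h : 0 < P (x, x, z)) : 0 < margX P x :=
  (h.trans_le (Finset.single_le_sum (f := fun z => P (x, x, z)) (fun z _ => hnn _)
    (Finset.mem_univ z))).trans_le
    (Finset.single_le_sum (f := fun y => ∑ z, P (x, y, z))
      (fun y _ => Finset.sum_nonneg fun z _ => hnn _) (Finset.mem_univ x))

lemma margZ_pos {P : 𝒳 × 𝒳 × 𝒵 → ℝ} (hnn : ∀ p, 0 ≤ P p) {x : 𝒳} {z : 𝒵}
    (h : 0 < P (x, x, z)) : 0 < margZ P z :=
  (h.trans_le (Finset.single_le_sum (f := fun y => P (x, y, z)) (fun y _ => hnn _)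
    (Finset.mem_univ x))).trans_le
    (Finset.single_le_sum (f := fun x => ∑ y, P (x, y, z))
      (fun x _ => Finset.sum_nonneg fun y _ => hnn _) (Finset.mem_univ x))

/-- A distribution carried by the diagonal is determined by its `(X,Y)` and `(X,Z)` marginals:
the `(X,Y)` marginal forces `Q` to vanish off the diagonal, and then the `(X,Z)` marginal
is `Q` itself on the diagonal. -/
lemma deltaP_eq_singleton (P : 𝒳 × 𝒳 × 𝒵 → ℝ) (hP : IsDist P)
    (hdiag : ∀ x y z, y ≠ x → P (x, y, z) = 0) : ΔP P = {P} := by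
  refine Set.eq_singleton_iff_unique_mem.2
    ⟨⟨hP, fun _ _ => rfl, fun _ _ => rfl⟩, fun Q hQ => ?_⟩
  obtain ⟨⟨hnn, -⟩, hXY, hXZ⟩ := hQ
  have hQ0 : ∀ x y z, y ≠ x → Q (x, y, z) = 0 := by
    intro x y z hy
    have h : ∑ z, Q (x, y, z) = 0 :=
      (hXY x y).trans (Finset.sum_eq_zero fun z _ => hdiag x y z hy)
    exact (Finset.sum_eq_zero_iff_of_nonneg fun z _ => hnn (x, y, z)).1 h z (Finset.mem_univ z)
  funext ⟨x, y, z⟩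
  by_cases hy : y = x
  · subst hy
    rw [← margXZ_diag hQ0, ← margXZ_diag hdiag, hXZ]
  · rw [hQ0 x y z hy, hdiag x y z hy]

lemma miXZ_Y_diag {P : 𝒳 × 𝒳 × 𝒵 → ℝ} (hP : IsDist P)
    (hdiag : ∀ x y z, y ≠ x → P (x, y, z) = 0) : miXZ_Y P = 0 := by
  rw [miXZ_Y, sum_diag hdiag]
  refine Finset.sum_eq_zero fun x _ => Finset.sum_eq_zero fun z _ => ?_
  rcases (hP.1 (x, x, z)).eq_or_lt with h | h
  · rw [← h, zero_mul]
  have hX := margX_pos hP.1 h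
  rw [margY_diag hdiag, margXY_diag hdiag, margYZ_diag hdiag, mul_comm (P (x, x, z)) (margX P x),
    div_self (mul_pos hX h).ne', Real.log_one, mul_zero]

lemma miXY_Z_diag {P : 𝒳 × 𝒳 × 𝒵 → ℝ} (hP : IsDist P)
    (hdiag : ∀ x y z, y ≠ x → P (x, y, z) = 0) : miXY_Z P = hX_Z P := by
  rw [miXY_Z, hX_Z, sum_diag hdiag, ← Finset.sum_neg_distrib]
  refine Finset.sum_congr rfl fun x _ => ?_
  rw [← Finset.sum_neg_distrib]
  refine Finset.sum_congr rfl fun z _ => ?_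
  rw [margXZ_diag hdiag, margYZ_diag hdiag]
  rcases (hP.1 (x, x, z)).eq_or_lt with h | h
  · simp [← h]
  rw [mul_div_mul_left _ _ h.ne', ← mul_neg, ← Real.log_inv, inv_div]

/-- With `Y = X`, `MI(X:Y) = H(X)`; expanding `H(X)` as a sum over `(x, z)`, this is
`H(X) - H(X|Z) = MI(X:Z)`. -/
lemma coI_diag {P : 𝒳 × 𝒳 × 𝒵 → ℝ} (hP : IsDist P)
    (hdiag : ∀ x y z, y ≠ x → P (x, y, z) = 0) : coI P = miXZ P := by
  have hXY : miXY P = ∑ x, ∑ z, P (x, x, z) * Real.log (margX P x)⁻¹ := by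
    refine Finset.sum_congr rfl fun x _ => ?_
    rw [Fintype.sum_eq_single x fun y hy => by rw [margXY_off_diag hdiag hy, zero_mul],
      ← Finset.sum_mul, margXY_diag hdiag, margY_diag hdiag, div_self_mul_self',
      ← margXY_diag hdiag, margXY]
  rw [coI, hXY, miXY_Z_diag hP hdiag, hX_Z, sub_neg_eq_add, miXZ, ← Finset.sum_add_distrib]
  refine Finset.sum_congr rfl fun x _ => ?_
  rw [← Finset.sum_add_distrib]
  refine Finset.sum_congr rfl fun z _ => ?_
  rw [margXZ_diag hdiag]
  rcases (hP.1 (x, x, z)).eq_or_lt with h | h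
  · simp [← h]
  have hX := margX_pos hP.1 h
  have hZ := margZ_pos hP.1 h
  rw [Real.log_inv, Real.log_div h.ne' hZ.ne', Real.log_div h.ne' (mul_pos hX hZ).ne',
    Real.log_mul hX.ne' hZ.ne']
  ring

/-- if `Y = X` (the distribution is concentrated on the diagonal in the
first two coordinates), then `C̃I(X:X;Z) = 0`, `S̃I(X:X;Z) = MI(X:Z)`,
`ŨI(X:X∖Z) = H(X|Z)` and `ŨI(X:Z∖X) = 0`. -/
theorem stmt12 [Nonempty 𝒳] [Nonempty 𝒵]
    (P : 𝒳 × 𝒳 × 𝒵 → ℝ) (hP : IsDist P)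
    (hdiag : ∀ x y z, y ≠ x → P (x, y, z) = 0) :
    CI P = 0 ∧ SI P = miXZ P ∧ UIY P = hX_Z P ∧ UIZ P = 0 := by
  rw [CI, SI, UIY, UIZ, deltaP_eq_singleton P hP hdiag]
  simp only [Set.image_singleton, csInf_singleton, csSup_singleton]
  exact ⟨sub_self _, coI_diag hP hdiag, miXY_Z_diag hP hdiag, miXZ_Y_diag hP hdiag⟩

end PID
end

section
/- (Identity property.) Let 𝒳 = 𝒴 × 𝒵 and let P be a joint distribution on (𝒴 × 𝒵) × 𝒴 × 𝒵 with P((y',z'), y, z) = 0 unless y' = y and z' = z (this models X = (Y,Z)). Then P solves the optimization problems defining the decomposition, and C̃I((Y,Z):Y;Z) = 0, S̃I((Y,Z):Y;Z) = MI_P(Y:Z), ŨI((Y,Z):Y∖Z) = H_P(Y|Z), and ŨI((Y,Z):Z∖Y) = H_P(Z|Y), where MI_P(Y:Z), H_P(Y|Z), H_P(Z|Y) are computed from the (Y,Z)-marginal of P. -/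
/-!
Since `X = (Y, Z)` under `P`, the pair marginals on `(X, Y)` and `(X, Z)` already force any
`Q ∈ Δ_P` to vanish off the diagonal `x = (y, z)`: a nonnegative function with a zero marginal value
vanishes on the corresponding fibre. On the diagonal the `(X, Y)`-marginal then has at most one
nonzero summand, so it determines `Q`. Hence `Δ_P = {P}` (`ΔP_eq_singleton`), every optimization
problem is solved by `P`, and each optimum is the value of its objective at `P`.

These values are found by writing `P = copyDist p` for the `(Y, Z)`-law `p`: all sums over `(x, y, z)`
collapse to sums over `(y, z)`, where `margX P (y, z) = p y z`,
`margXY P (y, z) y = margXZ P (y, z) z = p y z`, and the claims become termwise identities between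
logarithms wherever `p y z ≠ 0`.
-/


open scoped BigOperators
open Real

namespace PID

variable {𝒳 𝒴 𝒵 : Type*} [Fintype 𝒳] [Fintype 𝒴] [Fintype 𝒵]

/-- The joint law of `((Y, Z), Y, Z)` when `(Y, Z)` has law `p`. -/
noncomputable def copyDist (p : 𝒴 → 𝒵 → ℝ) : (𝒴 × 𝒵) × 𝒴 × 𝒵 → ℝ :=
  open Classical in fun q => if q.1 = q.2 then p q.2.1 q.2.2 else 0

section CopyDist

variable (p : 𝒴 → 𝒵 → ℝ)

lemma copyDist_diag (y : 𝒴) (z : 𝒵) : copyDist p ((y, z), y, z) = p y z := by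
  simp [copyDist]

lemma copyDist_off {x : 𝒴 × 𝒵} {y : 𝒴} {z : 𝒵} (h : x ≠ (y, z)) :
    copyDist p (x, y, z) = 0 := by
  simp [copyDist, h]

lemma sum_copyDist_mul (G : 𝒴 × 𝒵 → 𝒴 → 𝒵 → ℝ) :
    ∑ x, ∑ y, ∑ z, copyDist p (x, y, z) * G x y z = ∑ y, ∑ z, p y z * G (y, z) y z := by
  rw [Fintype.sum_prod_type]
  refine Finset.sum_congr rfl fun a _ => Finset.sum_congr rfl fun b _ => ?_
  rw [Fintype.sum_eq_single a, Fintype.sum_eq_single b, copyDist_diag]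
  · intro z hz
    rw [copyDist_off p (by simpa using hz.symm), zero_mul]
  · intro y hy
    refine Finset.sum_eq_zero fun z _ => ?_
    rw [copyDist_off p (by simp [hy.symm]), zero_mul]

lemma margXY_copyDist (y : 𝒴) (z : 𝒵) : margXY (copyDist p) (y, z) y = p y z := by
  unfold margXY
  rw [Fintype.sum_eq_single z, copyDist_diag]
  intro z' hz
  exact copyDist_off p (by simpa using hz.symm)

lemma margXY_copyDist_off {x : 𝒴 × 𝒵} {y : 𝒴} (h : x.1 ≠ y) :
    margXY (copyDist p) x y = 0 :=
  Finset.sum_eq_zero fun z _ => copyDist_off p (by rintro rfl; exact h rfl)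

lemma margXZ_copyDist (y : 𝒴) (z : 𝒵) : margXZ (copyDist p) (y, z) z = p y z := by
  unfold margXZ
  rw [Fintype.sum_eq_single y, copyDist_diag]
  intro y' hy
  exact copyDist_off p (by simpa using hy.symm)

lemma margYZ_copyDist (y : 𝒴) (z : 𝒵) : margYZ (copyDist p) y z = p y z := by
  unfold margYZ
  rw [Fintype.sum_eq_single (y, z), copyDist_diag]
  intro x hx
  exact copyDist_off p hx

lemma margX_copyDist (y : 𝒴) (z : 𝒵) : margX (copyDist p) (y, z) = p y z := by
  change ∑ y', margXY (copyDist p) (y, z) y' = _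
  rw [Fintype.sum_eq_single y, margXY_copyDist]
  intro y' hy
  exact margXY_copyDist_off p hy.symm

lemma margY_copyDist (y : 𝒴) : margY (copyDist p) y = ∑ z, p y z := by
  unfold margY
  rw [Finset.sum_comm]
  exact Finset.sum_congr rfl fun z _ => margYZ_copyDist p y z

lemma margZ_copyDist (z : 𝒵) : margZ (copyDist p) z = ∑ y, p y z := by
  unfold margZ
  rw [Finset.sum_comm]
  exact Finset.sum_congr rfl fun y _ => margYZ_copyDist p y z

lemma miXY_copyDist :
    miXY (copyDist p) = ∑ y, ∑ z, p y z * Real.log (p y z / (p y z * ∑ z', p y z')) := by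
  unfold miXY
  rw [Fintype.sum_prod_type]
  refine Finset.sum_congr rfl fun a _ => Finset.sum_congr rfl fun b _ => ?_
  rw [Fintype.sum_eq_single a, margXY_copyDist, margX_copyDist, margY_copyDist]
  intro y hy
  rw [margXY_copyDist_off p hy.symm, zero_mul]

lemma miXY_Z_copyDist : miXY_Z (copyDist p) = hY_Z (copyDist p) := by
  unfold miXY_Z hY_Z
  rw [sum_copyDist_mul, ← Finset.sum_neg_distrib]
  refine Finset.sum_congr rfl fun y _ => ?_
  rw [← Finset.sum_neg_distrib]
  refine Finset.sum_congr rfl fun z _ => ?_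
  rw [copyDist_diag, margXZ_copyDist, margYZ_copyDist]
  by_cases h : p y z = 0
  · simp [h]
  · rw [mul_div_mul_left _ _ h, ← inv_div (p y z), Real.log_inv, mul_neg]

lemma miXZ_Y_copyDist : miXZ_Y (copyDist p) = hZ_Y (copyDist p) := by
  unfold miXZ_Y hZ_Y
  rw [sum_copyDist_mul, ← Finset.sum_neg_distrib]
  refine Finset.sum_congr rfl fun y _ => ?_
  rw [← Finset.sum_neg_distrib]
  refine Finset.sum_congr rfl fun z _ => ?_
  rw [copyDist_diag, margXY_copyDist, margYZ_copyDist]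
  by_cases h : p y z = 0
  · simp [h]
  · rw [mul_div_mul_left _ _ h, ← inv_div (p y z), Real.log_inv, mul_neg]

/-- With `X = (Y, Z)` the co-information is `MI(X:Y) - MI(X:Y|Z) = H(Y) - H(Y|Z) = MI(Y:Z)`. -/
lemma coI_copyDist (hp : ∀ y z, 0 ≤ p y z) : coI (copyDist p) = miYZ (copyDist p) := by
  unfold coI
  rw [miXY_copyDist, miXY_Z_copyDist]
  unfold hY_Z miYZ
  rw [sub_neg_eq_add, ← Finset.sum_add_distrib]
  refine Finset.sum_congr rfl fun y _ => ?_
  rw [← Finset.sum_add_distrib]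
  refine Finset.sum_congr rfl fun z _ => ?_
  rw [margYZ_copyDist, margY_copyDist, margZ_copyDist]
  by_cases h : p y z = 0
  · simp [h]
  · have h0 : 0 < p y z := lt_of_le_of_ne (hp y z) (Ne.symm h)
    have hy : 0 < ∑ z', p y z' :=
      h0.trans_le (Finset.single_le_sum (fun z' _ => hp y z') (Finset.mem_univ z))
    have hz : 0 < ∑ y', p y' z :=
      h0.trans_le (Finset.single_le_sum (f := fun y' => p y' z) (fun y' _ => hp y' z)
        (Finset.mem_univ y))
    rw [Real.log_div h (by positivity), Real.log_mul h hy.ne', Real.log_div h hz.ne',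
      Real.log_div h (by positivity), Real.log_mul hy.ne' hz.ne']
    ring

/-- The `(X, Y)`- and `(X, Z)`-marginals determine a joint distribution with `X = (Y, Z)`. -/
lemma ΔP_eq_singleton (hP : IsDist (copyDist p)) : ΔP (copyDist p) = {copyDist p} := by
  refine Set.eq_singleton_iff_unique_mem.2 ⟨⟨hP, fun _ _ => rfl, fun _ _ => rfl⟩, ?_⟩
  rintro Q ⟨⟨hQ, -⟩, hXY, hXZ⟩
  have off : ∀ (x : 𝒴 × 𝒵) (y : 𝒴) (z : 𝒵), x ≠ (y, z) → Q (x, y, z) = 0 := by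
    rintro ⟨a, b⟩ y z hne
    by_cases hay : a = y
    · subst hay
      have hbz : b ≠ z := fun h => hne (by rw [h])
      have h0 : ∑ y', Q ((a, b), y', z) = 0 :=
        (hXZ (a, b) z).trans
          (Finset.sum_eq_zero fun y' _ => copyDist_off p (by simp [hbz]))
      exact (Finset.sum_eq_zero_iff_of_nonneg fun y' _ => hQ _).1 h0 a (Finset.mem_univ a)
    · have h0 : ∑ z', Q ((a, b), y, z') = 0 :=
        (hXY (a, b) y).trans (margXY_copyDist_off p hay)
      exact (Finset.sum_eq_zero_iff_of_nonneg fun z' _ => hQ _).1 h0 z (Finset.mem_univ z)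
  funext ⟨x, y, z⟩
  by_cases hx : x = (y, z)
  · subst hx
    have h := hXY (y, z) y
    rw [margXY_copyDist, margXY, Fintype.sum_eq_single z] at h
    · rw [h, copyDist_diag]
    · intro z' hz
      exact off _ _ _ (by simpa using hz.symm)
  · rw [off x y z hx, copyDist_off p hx]

end CopyDist

/-- identity property: if `X = (Y,Z)`, then `P` solves the optimization
problems, `C̃I = 0`, `S̃I = MI(Y:Z)`, `ŨI((Y,Z):Y∖Z) = H(Y|Z)` and `ŨI((Y,Z):Z∖Y) = H(Z|Y)`. -/
theorem stmt13 [Nonempty 𝒴] [Nonempty 𝒵]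
    (P : (𝒴 × 𝒵) × 𝒴 × 𝒵 → ℝ) (hP : IsDist P)
    (hcopy : ∀ (y' : 𝒴) (z' : 𝒵) (y : 𝒴) (z : 𝒵),
      (y', z') ≠ (y, z) → P ((y', z'), y, z) = 0) :
    (∀ Q ∈ ΔP P, miXY_Z P ≤ miXY_Z Q) ∧
    (∀ Q ∈ ΔP P, miXZ_Y P ≤ miXZ_Y Q) ∧
    (∀ Q ∈ ΔP P, miXYZ P ≤ miXYZ Q) ∧
    (∀ Q ∈ ΔP P, coI Q ≤ coI P) ∧
    (∀ Q ∈ ΔP P, hX_YZ Q ≤ hX_YZ P) ∧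
    CI P = 0 ∧ SI P = miYZ P ∧ UIY P = hY_Z P ∧ UIZ P = hZ_Y P := by
  obtain ⟨p, rfl⟩ : ∃ p, P = copyDist p := by
    refine ⟨fun y z => P ((y, z), y, z), ?_⟩
    funext ⟨⟨y', z'⟩, y, z⟩
    by_cases h : (y', z') = (y, z)
    · cases h
      rw [copyDist_diag]
    · rw [hcopy _ _ _ _ h, copyDist_off _ h]
  have hp : ∀ y z, 0 ≤ p y z := fun y z => copyDist_diag p y z ▸ hP.1 ((y, z), y, z)
  have hΔ := ΔP_eq_singleton p hP
  unfold CI SI UIY UIZ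
  rw [hΔ]
  simp only [Set.image_singleton, csInf_singleton, csSup_singleton, Set.mem_singleton_iff,
    forall_eq, le_refl, sub_self, true_and]
  exact ⟨coI_copyDist p hp, miXY_Z_copyDist p, miXZ_Y_copyDist p⟩

end PID
end

section
/- Let A : ℝ^(𝒳×𝒴×𝒵) → ℝ^(𝒳×𝒴) × ℝ^(𝒳×𝒵) be the linear map sending f to its two pair marginals, (A f)₁(x,y) = Σ_z f(x,y,z) and (A f)₂(x,z) = Σ_y f(x,y,z). For x ∈ 𝒳, y,y' ∈ 𝒴, z,z' ∈ 𝒵 let γ_{x;y,y';z,z'} = δ_{x,y,z} + δ_{x,y',z'} − δ_{x,y',z} − δ_{x,y,z'}, where δ_{x,y,z} is the indicator function of the point (x,y,z). Then: (i) the kernel of A has dimension |𝒳|·(|𝒴|−1)·(|𝒵|−1); (ii) the vectors γ_{x;y,y';z,z'} (over all x,y,y',z,z') span the kernel of A; (iii) for any fixed y₀ ∈ 𝒴 and z₀ ∈ 𝒵, the vectors γ_{x;y₀,y;z₀,z} for x ∈ 𝒳, y ∈ 𝒴∖{y₀}, z ∈ 𝒵∖{z₀} form a basis of the kernel of A. 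-/
/-! Off the two slices `y = y₀` and `z = z₀`, the vector `γ_{x;y₀,y;z₀,z}` coincides with the
indicator of `(x, y, z)` (`gamma_apply_off`), while an element of `ker A` is determined by its values
there, because the vanishing marginals recover the two slices (`eq_zero_of_mem_ker`). Evaluation at
these points is therefore dual to the family `γ_{x;y₀,y;z₀,z}`: this gives linear independence, and
every `f ∈ ker A` equals `∑ f(x,y,z) γ_{x;y₀,y;z₀,z}`, as the difference lies in `ker A` and vanishes
off the slices. The dimension is then the number of index triples, and the family of all `γ`
spans because it is contained in `ker A` and contains this basis. -/

open scoped BigOperators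
open Real

namespace PID

variable {𝒳 𝒴 𝒵 : Type*} [Fintype 𝒳] [Fintype 𝒴] [Fintype 𝒵]

/-- The linear map `A` sending `f : 𝒳 × 𝒴 × 𝒵 → ℝ` to its two pair marginals. -/
noncomputable def margMap :
    ((𝒳 × 𝒴 × 𝒵) → ℝ) →ₗ[ℝ] ((𝒳 × 𝒴) → ℝ) × ((𝒳 × 𝒵) → ℝ) where
  toFun f := (fun p => ∑ z, f (p.1, p.2, z), fun p => ∑ y, f (p.1, y, p.2))
  map_add' f g := by
    refine Prod.ext ?_ ?_ <;> funext p <;> simp [Finset.sum_add_distrib]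
  map_smul' c f := by
    refine Prod.ext ?_ ?_ <;> funext p <;> simp [Finset.mul_sum]

/-- `δ_{x,y,z}`: the indicator function of the point `(x,y,z)`. -/
noncomputable def pointMass (x : 𝒳) (y : 𝒴) (z : 𝒵) : 𝒳 × 𝒴 × 𝒵 → ℝ :=
  open Classical in fun p => if p = (x, y, z) then 1 else 0

/-- `γ_{x;y,y';z,z'} = δ_{x,y,z} + δ_{x,y',z'} − δ_{x,y',z} − δ_{x,y,z'}`. -/
noncomputable def gamma (x : 𝒳) (y y' : 𝒴) (z z' : 𝒵) : 𝒳 × 𝒴 × 𝒵 → ℝ :=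
  pointMass x y z + pointMass x y' z' - pointMass x y' z - pointMass x y z'

set_option linter.unusedSectionVars false

lemma gamma_mem_ker (x : 𝒳) (y y' : 𝒴) (z z' : 𝒵) :
    gamma x y y' z z' ∈ LinearMap.ker (margMap (𝒳 := 𝒳) (𝒴 := 𝒴) (𝒵 := 𝒵)) := by
  classical
  rw [LinearMap.mem_ker]
  refine Prod.ext ?_ ?_
  · funext p
    obtain ⟨a, b⟩ := p
    simp [margMap, gamma, pointMass, Finset.sum_add_distrib, Finset.sum_sub_distrib, ite_and]
  · funext p
    obtain ⟨a, b⟩ := p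
    simp only [margMap, gamma, pointMass, LinearMap.coe_mk, AddHom.coe_mk, Pi.add_apply,
      Pi.sub_apply, Prod.mk.injEq, Finset.sum_add_distrib, Finset.sum_sub_distrib]
    by_cases ha : a = x <;> by_cases hb : b = z <;> by_cases hb' : b = z' <;>
      simp [ite_and, ha, hb, hb']

open Classical in
/-- Evaluation at the points off the slices `y = y₀`, `z = z₀` is dual to the family
`γ_{x;y₀,y;z₀,z}`: of the four point masses only `δ_{x,y,z}` is supported there. -/
lemma gamma_apply_off {y₀ : 𝒴} {z₀ : 𝒵}
    (s t : 𝒳 × {y : 𝒴 // y ≠ y₀} × {z : 𝒵 // z ≠ z₀}) :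
    gamma t.1 y₀ t.2.1.1 z₀ t.2.2.1 (s.1, s.2.1.1, s.2.2.1) = if s = t then 1 else 0 := by
  obtain ⟨x, ⟨y, hy⟩, ⟨z, hz⟩⟩ := s
  obtain ⟨x', ⟨y', hy'⟩, ⟨z', hz'⟩⟩ := t
  simp [gamma, pointMass, hy, hz]

lemma sum_smul_gamma_apply_off {y₀ : 𝒴} {z₀ : 𝒵}
    [Fintype (𝒳 × {y : 𝒴 // y ≠ y₀} × {z : 𝒵 // z ≠ z₀})]
    (g : 𝒳 × {y : 𝒴 // y ≠ y₀} × {z : 𝒵 // z ≠ z₀} → ℝ)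
    (s : 𝒳 × {y : 𝒴 // y ≠ y₀} × {z : 𝒵 // z ≠ z₀}) :
    (∑ t, g t • gamma t.1 y₀ t.2.1.1 z₀ t.2.2.1) (s.1, s.2.1.1, s.2.2.1) = g s := by
  classical
  simp [Finset.sum_apply, gamma_apply_off]

/-- An element of `ker A` is determined by its values off the slices `y = y₀` and `z = z₀`. The
`(x, y)`-marginal forces `f (x, y, z₀) = 0` for `y ≠ y₀`, and then the `(x, z)`-marginal forces
`f (x, y₀, z) = 0` for every `z`. -/
lemma eq_zero_of_mem_ker {y₀ : 𝒴} {z₀ : 𝒵} {f : 𝒳 × 𝒴 × 𝒵 → ℝ}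
    (hf : f ∈ LinearMap.ker (margMap (𝒳 := 𝒳) (𝒴 := 𝒴) (𝒵 := 𝒵)))
    (h : ∀ x y z, y ≠ y₀ → z ≠ z₀ → f (x, y, z) = 0) : f = 0 := by
  rw [LinearMap.mem_ker] at hf
  have h1 : ∀ x y, ∑ z, f (x, y, z) = 0 := fun x y =>
    congrFun (congrArg Prod.fst hf) (x, y)
  have h2 : ∀ x z, ∑ y, f (x, y, z) = 0 := fun x z =>
    congrFun (congrArg Prod.snd hf) (x, z)
  have h3 : ∀ x y, y ≠ y₀ → f (x, y, z₀) = 0 := fun x y hy => by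
    rw [← h1 x y]
    exact (Fintype.sum_eq_single z₀ fun z hz => h x y z hy hz).symm
  have h4 : ∀ x y z, y ≠ y₀ → f (x, y, z) = 0 := fun x y z hy => by
    by_cases hz : z = z₀
    · rw [hz, h3 x y hy]
    · exact h x y z hy hz
  funext ⟨x, y, z⟩
  by_cases hy : y = y₀
  · rw [hy, Pi.zero_apply, ← h2 x z]
    exact (Fintype.sum_eq_single y₀ fun y hy => h4 x y z hy).symm
  · exact h4 x y z hy

/-- the kernel of the pair-marginal map `A` has dimension
`|𝒳|·(|𝒴|−1)·(|𝒵|−1)`, is spanned by the vectors `γ_{x;y,y';z,z'}`, and for fixed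
`y₀, z₀` the vectors `γ_{x;y₀,y;z₀,z}` (with `y ≠ y₀`, `z ≠ z₀`) form a basis of it. -/
theorem stmt17 [Nonempty 𝒳] [Nonempty 𝒴] [Nonempty 𝒵] (y₀ : 𝒴) (z₀ : 𝒵) :
    Module.finrank ℝ (LinearMap.ker (margMap (𝒳 := 𝒳) (𝒴 := 𝒴) (𝒵 := 𝒵))) =
      Fintype.card 𝒳 * (Fintype.card 𝒴 - 1) * (Fintype.card 𝒵 - 1) ∧
    Submodule.span ℝ {f : 𝒳 × 𝒴 × 𝒵 → ℝ | ∃ x y y' z z', f = gamma x y y' z z'} =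
      LinearMap.ker margMap ∧
    (LinearIndependent ℝ
      (fun t : 𝒳 × {y : 𝒴 // y ≠ y₀} × {z : 𝒵 // z ≠ z₀} =>
        gamma t.1 y₀ t.2.1.1 z₀ t.2.2.1) ∧
     Submodule.span ℝ
       (Set.range (fun t : 𝒳 × {y : 𝒴 // y ≠ y₀} × {z : 𝒵 // z ≠ z₀} =>
         gamma t.1 y₀ t.2.1.1 z₀ t.2.2.1)) = LinearMap.ker margMap) := by
  classical
  have hli : LinearIndependent ℝ
      (fun t : 𝒳 × {y : 𝒴 // y ≠ y₀} × {z : 𝒵 // z ≠ z₀} =>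
        gamma t.1 y₀ t.2.1.1 z₀ t.2.2.1) := by
    rw [Fintype.linearIndependent_iff]
    intro g hg s
    rw [← sum_smul_gamma_apply_off g s, hg, Pi.zero_apply]
  have hspan : Submodule.span ℝ
       (Set.range (fun t : 𝒳 × {y : 𝒴 // y ≠ y₀} × {z : 𝒵 // z ≠ z₀} =>
         gamma t.1 y₀ t.2.1.1 z₀ t.2.2.1)) = LinearMap.ker margMap := by
    refine le_antisymm ?_ fun f hf => ?_
    · rw [Submodule.span_le]
      rintro _ ⟨t, rfl⟩
      exact gamma_mem_ker _ _ _ _ _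
    · set e : 𝒳 × 𝒴 × 𝒵 → ℝ :=
        ∑ t : 𝒳 × {y : 𝒴 // y ≠ y₀} × {z : 𝒵 // z ≠ z₀},
          f (t.1, t.2.1.1, t.2.2.1) • gamma t.1 y₀ t.2.1.1 z₀ t.2.2.1 with he
      have hfe : f - e = 0 := by
        refine eq_zero_of_mem_ker (y₀ := y₀) (z₀ := z₀)
          (Submodule.sub_mem _ hf (Submodule.sum_mem _ fun t _ =>
            Submodule.smul_mem _ _ (gamma_mem_ker _ _ _ _ _))) fun x y z hy hz => ?_
        rw [Pi.sub_apply, sub_eq_zero]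
        exact (sum_smul_gamma_apply_off (fun t => f (t.1, t.2.1.1, t.2.2.1))
          (x, ⟨y, hy⟩, ⟨z, hz⟩)).symm
      rw [sub_eq_zero.mp hfe]
      exact Submodule.sum_mem _ fun t _ =>
        Submodule.smul_mem _ _ (Submodule.subset_span ⟨t, rfl⟩)
  refine ⟨?_, ?_, hli, hspan⟩
  · rw [← hspan, finrank_span_eq_card hli]
    simp [Fintype.card_subtype_compl, mul_assoc]
  · refine le_antisymm ?_ ?_
    · rw [Submodule.span_le]
      rintro _ ⟨x, y, y', z, z', rfl⟩
      exact gamma_mem_ker _ _ _ _ _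
    · rw [← hspan]
      refine Submodule.span_mono ?_
      rintro _ ⟨t, rfl⟩
      exact ⟨_, _, _, _, _, rfl⟩

end PID
end

section
/- Let Q be a joint distribution on 𝒳 × 𝒴 × 𝒵 and fix x ∈ 𝒳, y, y' ∈ 𝒴, z, z' ∈ 𝒵 such that the entries Q(x,y,z), Q(x,y',z'), Q(x,y',z), Q(x,y,z') and the marginals Q(y,z) = Σ_{x'} Q(x',y,z), Q(y',z'), Q(y',z), Q(y,z') are all strictly positive. Let γ = γ_{x;y,y';z,z'} = δ_{x,y,z} + δ_{x,y',z'} − δ_{x,y',z} − δ_{x,y,z'}. Then the function t ↦ MI_{Q+tγ}(X:(Y,Z)) is differentiable at t = 0 with derivative log[ (Q(x,y,z)·Q(x,y',z')·Q(y',z)·Q(y,z')) / (Q(x,y',z)·Q(x,y,z')·Q(y,z)·Q(y',z')) ]. -/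
/-!
Let `γ` be a direction that vanishes wherever `Q` does and whose `X`-marginal is zero. Then each
summand `a log (a / (m c))` of `MI(X:(Y,Z))` at `Q + tγ`, with `a = Q + tγ`, `m` its `X`-marginal
and `c` its `(Y,Z)`-marginal, is differentiable at `t = 0`: either `Q p = 0`, and the summand is
identically zero, or `a`, `m`, `c` are all positive at `0`. Since `m` does not vary, its derivative
is `γ p log (Q p / (m c)) + γ p - Q p c' / c`. The last two terms both sum over `p` to the total
mass of `γ`, so they cancel, leaving `∑ γ p log (Q p / (m c))` (`hasDerivAt_miXYZ`). For
`γ = γ_{x;y,y';z,z'}` this sum is an alternating sum of four logarithms, in which the four copies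
of `margX Q x` cancel.
-/

open scoped BigOperators
open Real

namespace PID

variable {𝒳 𝒴 𝒵 : Type*} [Fintype 𝒳] [Fintype 𝒴] [Fintype 𝒵]

lemma margX_line {γ : 𝒳 × 𝒴 × 𝒵 → ℝ} (Q : 𝒳 × 𝒴 × 𝒵 → ℝ) (hγ : ∀ a, margX γ a = 0)
    (t : ℝ) (a : 𝒳) : margX (Q + t • γ) a = margX Q a := by
  have h : margX (Q + t • γ) a = margX Q a + t * margX γ a := by
    simp [margX, Finset.sum_add_distrib, Finset.mul_sum]
  rw [h, hγ, mul_zero, add_zero]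

lemma margYZ_line (Q γ : 𝒳 × 𝒴 × 𝒵 → ℝ) (t : ℝ) (b : 𝒴) (c : 𝒵) :
    margYZ (Q + t • γ) b c = margYZ Q b c + t * margYZ γ b c := by
  simp [margYZ, Finset.sum_add_distrib, Finset.mul_sum]

lemma margX_pos_s19 {Q : 𝒳 × 𝒴 × 𝒵 → ℝ} (hQ : ∀ p, 0 ≤ Q p) {a : 𝒳} {b : 𝒴} {c : 𝒵}
    (h : 0 < Q (a, b, c)) : 0 < margX Q a :=
  Finset.sum_pos' (fun _ _ => Finset.sum_nonneg fun _ _ => hQ _)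
    ⟨b, Finset.mem_univ _, Finset.sum_pos' (fun _ _ => hQ _) ⟨c, Finset.mem_univ _, h⟩⟩

lemma margYZ_pos {Q : 𝒳 × 𝒴 × 𝒵 → ℝ} (hQ : ∀ p, 0 ≤ Q p) {a : 𝒳} {b : 𝒴} {c : 𝒵}
    (h : 0 < Q (a, b, c)) : 0 < margYZ Q b c :=
  Finset.sum_pos' (fun _ _ => hQ _) ⟨a, Finset.mem_univ _, h⟩

/-- Derivative of a single summand of the mutual information, for positive values at `t = 0`. -/
lemma hasDerivAt_term {q g m c d : ℝ} (hq : 0 < q) (hm : 0 < m) (hc : 0 < c) :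
    HasDerivAt (fun t : ℝ => (q + t * g) * Real.log ((q + t * g) / (m * (c + t * d))))
      (g * Real.log (q / (m * c)) + g - q * d / c) 0 := by
  have ha : HasDerivAt (fun t : ℝ => q + t * g) g 0 := by
    simpa using ((hasDerivAt_id (0 : ℝ)).mul_const g).const_add q
  have hb : HasDerivAt (fun t : ℝ => m * (c + t * d)) (m * d) 0 := by
    simpa using (((hasDerivAt_id (0 : ℝ)).mul_const d).const_add c).const_mul m
  have hb0 : m * (c + 0 * d) ≠ 0 := by simp [hm.ne', hc.ne']
  have hab : (q + 0 * g) / (m * (c + 0 * d)) ≠ 0 := by simp [hm.ne', hc.ne', hq.ne']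
  refine (ha.mul ((ha.div hb hb0).log hab)).congr_deriv ?_
  simp only [zero_mul, add_zero, Pi.div_apply]
  field_simp
  ring

/-- Directional derivative of `MI(X:(Y,Z))` along any direction supported in the support of `Q`
that leaves the `X`-marginal unchanged. -/
lemma hasDerivAt_miXYZ {Q γ : 𝒳 × 𝒴 × 𝒵 → ℝ} (hQ : ∀ p, 0 ≤ Q p)
    (hsupp : ∀ p, Q p = 0 → γ p = 0) (hγ : ∀ a, margX γ a = 0) :
    HasDerivAt (fun t : ℝ => miXYZ (Q + t • γ))
      (∑ a, ∑ b, ∑ c, γ (a, b, c) * Real.log (Q (a, b, c) / (margX Q a * margYZ Q b c))) 0 := by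
  have hterm : ∀ a b c, HasDerivAt
      (fun t : ℝ => (Q (a, b, c) + t * γ (a, b, c)) * Real.log ((Q (a, b, c) + t * γ (a, b, c)) /
        (margX Q a * (margYZ Q b c + t * margYZ γ b c))))
      (γ (a, b, c) * Real.log (Q (a, b, c) / (margX Q a * margYZ Q b c)) + γ (a, b, c)
        - Q (a, b, c) * margYZ γ b c / margYZ Q b c) 0 := by
    intro a b c
    rcases (hQ (a, b, c)).eq_or_lt with h | h
    · simpa [← h, hsupp _ h.symm] using hasDerivAt_const (0 : ℝ) (0 : ℝ)
    · exact hasDerivAt_term h (margX_pos_s19 hQ h) (margYZ_pos hQ h)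
  have hsum := HasDerivAt.fun_sum (u := Finset.univ) fun a _ =>
    HasDerivAt.fun_sum (u := Finset.univ) fun b _ =>
      HasDerivAt.fun_sum (u := Finset.univ) fun c _ => hterm a b c
  have htot : ∑ a, ∑ b, ∑ c, γ (a, b, c) = 0 := Finset.sum_eq_zero fun a _ => hγ a
  -- Summing `Q(a,b,c) γ(b,c) / Q(b,c)` over `a` gives `γ(b,c)`, also where `Q(b,c) = 0`,
  -- because there `γ(b,c) = 0` as well.
  have hcol : ∀ b c, ∑ a, Q (a, b, c) * margYZ γ b c / margYZ Q b c = margYZ γ b c := by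
    intro b c
    rw [← Finset.sum_div, ← Finset.sum_mul]
    change margYZ Q b c * margYZ γ b c / margYZ Q b c = _
    by_cases h : margYZ Q b c = 0
    · have h0 : margYZ γ b c = 0 := Finset.sum_eq_zero fun a _ => hsupp _
        ((Finset.sum_eq_zero_iff_of_nonneg fun _ _ => hQ _).1 h a (Finset.mem_univ a))
      simp [h0]
    · field_simp
  have hswap : ∀ f : 𝒳 → 𝒴 → 𝒵 → ℝ,
      ∑ a, ∑ b, ∑ c, f a b c = ∑ b, ∑ c, ∑ a, f a b c := by
    intro f
    rw [Finset.sum_comm]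
    exact Finset.sum_congr rfl fun b _ => Finset.sum_comm
  have hlast : ∑ a, ∑ b, ∑ c, Q (a, b, c) * margYZ γ b c / margYZ Q b c = 0 := by
    rw [hswap]
    simp only [hcol]
    exact (hswap fun a b c => γ (a, b, c)).symm.trans htot
  have hfun : (fun t : ℝ => miXYZ (Q + t • γ)) = fun t => ∑ a, ∑ b, ∑ c,
      (Q (a, b, c) + t * γ (a, b, c)) * Real.log ((Q (a, b, c) + t * γ (a, b, c)) /
        (margX Q a * (margYZ Q b c + t * margYZ γ b c))) := by
    funext t
    simp only [miXYZ, margX_line Q hγ, margYZ_line, Pi.add_apply, Pi.smul_apply, smul_eq_mul]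
  rw [hfun]
  refine hsum.congr_deriv ?_
  simp only [Finset.sum_sub_distrib, Finset.sum_add_distrib, htot, hlast, add_zero, sub_zero]

lemma sum_pointMass_mul (x : 𝒳) (y : 𝒴) (z : 𝒵) (f : 𝒳 → 𝒴 → 𝒵 → ℝ) :
    ∑ a, ∑ b, ∑ c, pointMass x y z (a, b, c) * f a b c = f x y z := by
  classical
  rw [Finset.sum_eq_single x, Finset.sum_eq_single y, Finset.sum_eq_single z] <;>
    simp +contextual [pointMass]

lemma margX_pointMass (x : 𝒳) (y : 𝒴) (z : 𝒵) (a : 𝒳) [Decidable (a = x)] :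
    margX (pointMass x y z) a = if a = x then 1 else 0 := by
  classical
  rw [margX, Finset.sum_eq_single y, Finset.sum_eq_single z] <;>
    simp +contextual [pointMass]

lemma margX_gamma (x : 𝒳) (y y' : 𝒴) (z z' : 𝒵) (a : 𝒳) : margX (gamma x y y' z z') a = 0 := by
  classical
  have h : margX (gamma x y y' z z') a = margX (pointMass x y z) a + margX (pointMass x y' z') a
      - margX (pointMass x y' z) a - margX (pointMass x y z') a := by
    simp [margX, gamma, Finset.sum_add_distrib, Finset.sum_sub_distrib]
  rw [h]
  simp only [margX_pointMass]
  ring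

/-- the derivative of `t ↦ MI_{Q+tγ}(X:(Y,Z))` at `t = 0` in the direction
`γ = γ_{x;y,y';z,z'}` is
`log[(Q(x,y,z)·Q(x,y',z')·Q(y',z)·Q(y,z')) / (Q(x,y',z)·Q(x,y,z')·Q(y,z)·Q(y',z'))]`. -/
theorem stmt19 [Nonempty 𝒳] [Nonempty 𝒴] [Nonempty 𝒵]
    (Q : 𝒳 × 𝒴 × 𝒵 → ℝ) (hQ : IsDist Q)
    (x : 𝒳) (y y' : 𝒴) (z z' : 𝒵)
    (h1 : 0 < Q (x, y, z)) (h2 : 0 < Q (x, y', z'))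
    (h3 : 0 < Q (x, y', z)) (h4 : 0 < Q (x, y, z'))
    (h5 : 0 < margYZ Q y z) (h6 : 0 < margYZ Q y' z')
    (h7 : 0 < margYZ Q y' z) (h8 : 0 < margYZ Q y z') :
    HasDerivAt (fun t : ℝ => miXYZ (Q + t • gamma x y y' z z'))
      (Real.log (Q (x, y, z) * Q (x, y', z') * margYZ Q y' z * margYZ Q y z' /
        (Q (x, y', z) * Q (x, y, z') * margYZ Q y z * margYZ Q y' z'))) 0 := by
  have hsupp : ∀ p, Q p = 0 → gamma x y y' z z' p = 0 := by
    intro p hp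
    have hne : ∀ {b c}, 0 < Q (x, b, c) → p ≠ (x, b, c) := fun h e => h.ne' (e ▸ hp)
    simp [gamma, pointMass, hne h1, hne h2, hne h3, hne h4]
  refine (hasDerivAt_miXYZ hQ.1 hsupp (margX_gamma x y y' z z')).congr_deriv ?_
  have hm := margX_pos_s19 hQ.1 h1
  simp only [gamma, Pi.add_apply, Pi.sub_apply, add_mul, sub_mul, Finset.sum_add_distrib,
    Finset.sum_sub_distrib]
  rw [sum_pointMass_mul x y z fun a b c => Real.log (Q (a, b, c) / (margX Q a * margYZ Q b c)),
    sum_pointMass_mul x y' z' fun a b c => Real.log (Q (a, b, c) / (margX Q a * margYZ Q b c)),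
    sum_pointMass_mul x y' z fun a b c => Real.log (Q (a, b, c) / (margX Q a * margYZ Q b c)),
    sum_pointMass_mul x y z' fun a b c => Real.log (Q (a, b, c) / (margX Q a * margYZ Q b c)),
    ← Real.log_mul (by positivity) (by positivity), ← Real.log_div (by positivity) (by positivity),
    ← Real.log_div (by positivity) (by positivity)]
  congr 1
  field_simp

end PID
end
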